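/- arXiv:1808.01179 — 4 statements merged into one kernel-verified Lean document; each statement's English description precedes it below -/
import Mathlib

section
/- Let k be an integer, m = 3k + 1 (so that m ≡ 1 (mod 3)), and d = 6m. Equip ℤ³ with basis e, f, ℓ and the symmetric bilinear form whose Gram matrix in this basis is G = [[0,1,0],[1,0,0],[0,0,d]] (i.e., a hyperbolic plane spanned by e, f, orthogonal to a vector ℓ of square d). Then the ℤ-linear map u defined by u(e) = −m·e + 3k²·f − k·ℓ, u(f) = 3·e − m·f + ℓ, u(ℓ) = 6m·e − 6mk·f + (2m−1)·ℓ is an isometry of this bilinear form, satisfies u ∘ u = id, and satisfies u(ℓ) ≡ (2m−1)·ℓ modulo d·ℤ³ (so u acts on the discriminant group ℤ/dℤ, generated by the class of ℓ/d, as multiplication by d/3 − 1). -/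
/-- The explicit orthogonal involution `u` of the lattice `ℤℓ_d ⊕ U`
(here `ℤ³` with basis `e, f, l`, Gram matrix `[[0,1,0],[1,0,0],[0,0,d]]`),
where `d = 6m`, `m = 3k + 1`: `u` is an isometry, an involution, and acts on
the discriminant group as multiplication by `2m - 1 = d/3 - 1`. -/
theorem stmt0 (k m d : ℤ) (hm : m = 3 * k + 1) (hd : d = 6 * m)
    (e f l : Fin 3 → ℤ)
    (he : e = ![1, 0, 0]) (hf : f = ![0, 1, 0]) (hl : l = ![0, 0, 1])
    (B : (Fin 3 → ℤ) → (Fin 3 → ℤ) → ℤ)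
    (hB : ∀ x y, B x y = x 0 * y 1 + x 1 * y 0 + d * (x 2 * y 2))
    (u : (Fin 3 → ℤ) →ₗ[ℤ] (Fin 3 → ℤ))
    (hue : u e = (-m) • e + (3 * k ^ 2) • f + (-k) • l)
    (huf : u f = (3 : ℤ) • e + (-m) • f + l)
    (hul : u l = (6 * m) • e + (-(6 * m * k)) • f + (2 * m - 1) • l) :
    (∀ x y, B (u x) (u y) = B x y) ∧
    (∀ x, u (u x) = x) ∧
    (∃ w : Fin 3 → ℤ, u l = (2 * m - 1) • l + d • w) := by
  have key : ∀ x : Fin 3 → ℤ, u x =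
      ![-m * x 0 + 3 * x 1 + 6 * m * x 2,
        3 * k ^ 2 * x 0 - m * x 1 - 6 * m * k * x 2,
        -k * x 0 + x 1 + (2 * m - 1) * x 2] := by
    intro x
    have hx : x = x 0 • e + x 1 • f + x 2 • l := by
      subst he hf hl
      ext i
      fin_cases i <;> simp
    have h : u x = x 0 • u e + x 1 • u f + x 2 • u l := by
      conv_lhs => rw [hx]
      simp only [map_add, map_smul]
    rw [h, hue, huf, hul]
    subst he hf hl
    ext i
    fin_cases i <;> simp <;> ring
  refine ⟨?_, ?_, ?_⟩
  · intro x y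
    rw [hB, hB, key x, key y]
    subst hd hm
    simp
    ring
  · intro x
    rw [key (u x), key x]
    subst hd hm
    ext i
    fin_cases i <;> simp <;> ring
  · refine ⟨e + (-k) • f, ?_⟩
    rw [hul]
    subst hd
    module
end

section
/- Let m be an integer. There exist integers a, n with a²·(6m) = 2·(n² + n + 1) if and only if there exist integers p, q with p odd, q even, and 3·p² − m·q² = −1. -/
/-- Addington's condition `a² (6m) = 2 (n² + n + 1)` is solvable iff
`3p² − m q² = −1` is solvable with `p` odd and `q` even. -/
theorem stmt4 (m : ℤ) :
    (∃ a n : ℤ, a ^ 2 * (6 * m) = 2 * (n ^ 2 + n + 1)) ↔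
    (∃ p q : ℤ, Odd p ∧ Even q ∧ 3 * p ^ 2 - m * q ^ 2 = -1) := by
  constructor
  · rintro ⟨a, n, h⟩
    have h3 : (3 : ℤ) ∣ (2 * n + 1) ^ 2 := ⟨4 * a ^ 2 * m - 1, by linarith⟩
    have h4 : (3 : ℤ) ∣ 2 * n + 1 := Int.prime_three.dvd_of_dvd_pow h3
    obtain ⟨k, rfl⟩ : ∃ k, n = 3 * k + 1 := ⟨(n - 1) / 3, by omega⟩
    exact ⟨2 * k + 1, 2 * a, ⟨k, rfl⟩, even_two_mul a, by linarith⟩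
  · rintro ⟨p, q, ⟨k, rfl⟩, ⟨r, rfl⟩, h⟩
    exact ⟨r, 3 * k + 1, by linarith⟩
end

section
/- There are no integers x, y with x² − 219·y² = −3. Consequently, there are no integers p, q with 3·p² − 73·q² = −1. -/
theorem aux (n : ℕ) : ∀ x y : ℤ, 0 ≤ x → 0 ≤ y → y.toNat = n → x ^ 2 - 219 * y ^ 2 ≠ -3 := by
  induction n using Nat.strong_induction_on with
  | _ n ih =>
    intro x y hx hy hn h
    have hy1 : 1 ≤ y := by
      by_contra hc
      have : y = 0 := by omega
      subst this
      nlinarith [sq_nonneg x]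
    have h1 : x < 15 * y := by
      by_contra! hc
      nlinarith
    have h2 : 73 * y < 5 * x := by
      by_contra! hc
      nlinarith
    have h3 : |74 * y - 5 * x| < y := by
      rw [abs_lt]; constructor <;> linarith
    have h4 := abs_nonneg (74 * y - 5 * x)
    refine ih (|74 * y - 5 * x|).toNat (by omega) |74 * x - 1095 * y| (|74 * y - 5 * x|)
      (abs_nonneg _) h4 rfl ?_
    rw [sq_abs, sq_abs]
    linear_combination h

theorem aux2 (x y : ℤ) : x ^ 2 - 219 * y ^ 2 ≠ -3 := by
  have := aux _ |x| |y| (abs_nonneg _) (abs_nonneg _) rfl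
  rwa [sq_abs, sq_abs] at this

/-- `x² − 219 y² = −3` has no integer solutions; consequently
`3p² − 73 q² = −1` has no integer solutions. -/
theorem stmt7 :
    (¬ ∃ x y : ℤ, x ^ 2 - 219 * y ^ 2 = -3) ∧
    (¬ ∃ p q : ℤ, 3 * p ^ 2 - 73 * q ^ 2 = -1) := by
  refine ⟨fun ⟨x, y, h⟩ => aux2 x y h, fun ⟨p, q, h⟩ => aux2 (3 * p) q ?_⟩
  linear_combination 3 * h
end

section
/- Let m be an odd integer. There exist integers p, q with 3·p² − m·q² = −1 if and only if there exist integers p, q with 12·p² − m·q² = −1, or integers p, q with 3·p² − 4m·q² = −1. -/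
/-- For `m` odd, `3p² − m q² = −1` is solvable iff `12p² − m q² = −1` or
`3p² − 4m q² = −1` is solvable. -/
theorem stmt10 (m : ℤ) (hm : Odd m) :
    (∃ p q : ℤ, 3 * p ^ 2 - m * q ^ 2 = -1) ↔
    ((∃ p q : ℤ, 12 * p ^ 2 - m * q ^ 2 = -1) ∨
     (∃ p q : ℤ, 3 * p ^ 2 - 4 * m * q ^ 2 = -1)) := by
  constructor
  · rintro ⟨p, q, h⟩
    rcases Int.even_or_odd p with hp | hp
    · obtain ⟨a, rfl⟩ := hp
      exact Or.inl ⟨a, q, by linear_combination h⟩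
    · rcases Int.even_or_odd q with hq | hq
      · obtain ⟨b, rfl⟩ := hq
        exact Or.inr ⟨p, b, by linear_combination h⟩
      · exfalso
        have h1 : Odd (3 * p ^ 2) := Odd.mul (by decide) hp.pow
        have h2 : Odd (m * q ^ 2) := hm.mul hq.pow
        have h3 := h1.sub_odd h2
        rw [h] at h3
        exact absurd h3 (by decide)
  · rintro (⟨p, q, h⟩ | ⟨p, q, h⟩)
    · exact ⟨2 * p, q, by linear_combination h⟩
    · exact ⟨p, 2 * q, by linear_combination h⟩
end
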